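/- For all integers j, k with 0 ≤ j < k, setting θ = (2j+1)π/(2(2k+1)), one has Σ_{i=0}^{k−1} 4(k−i)·cos((2i+1)θ) = cos(θ)/sin²(θ), and this quantity is strictly positive. (This sum equals the modulus of the eigenvalue λ_j of the Sub Rosa substitution expansion for n = 2k+1, since the Sub Rosa abelianized edgeword satisfies [Σ(n)]_i = n − (2i+1) = 2(k−i).) -/

import Mathlib

/-!
Summation by parts turns the weighted sum into a sum of the unweighted partial sums
`∑ i ≤ m, cos ((2 i + 1) θ)`. Multiplying by `2 sin θ` telescopes each partial sum to
`sin (2 (m + 1) θ)`, and multiplying by `2 sin θ` again telescopes the outer sum, so that `4 sin² θ`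
times the sum with weights `k - i` is `cos θ - cos ((2 k + 1) θ)`. The angle
`(2 k + 1) θ` is an odd multiple of `π / 2`, so the last cosine vanishes, and `j < k` places `θ` in
the first quadrant, where `cos θ / sin² θ` is positive.
-/

open Finset Real

theorem sum_range_sub_mul_eq_sum_sum_range {R : Type*} [NonAssocRing R] (f : ℕ → R) (n : ℕ) :
    ∑ i ∈ range n, ((n : R) - i) * f i = ∑ m ∈ range n, ∑ i ∈ range (m + 1), f i := by
  induction n with
  | zero => simp
  | succ n ih =>
    have weight_succ (i : ℕ) : ((n + 1 : ℕ) - i : R) * f i = (n - i) * f i + f i := by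
      rw [Nat.cast_succ, add_sub_right_comm, add_one_mul]
    simp only [weight_succ, sum_add_distrib, sum_range_succ _ n, ← ih, sub_self, zero_mul, zero_add,
      add_assoc]

theorem two_mul_sin_mul_sum_cos_odd_mul (θ : ℝ) (n : ℕ) :
    2 * sin θ * ∑ i ∈ range n, cos ((2 * i + 1) * θ) = sin (2 * n * θ) := calc
  _ = 2 * (sin (2 * θ / 2) * ∑ i ∈ range n, cos (2 * θ * i + θ)) := by
    rw [mul_div_cancel_left₀ θ two_ne_zero, mul_assoc]
    congr! 4
    ring
  _ = 2 * (sin (n * (2 * θ) / 2) * cos ((n - 1) * (2 * θ) / 2 + θ)) := by rw [sin_mul_sum_cos]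
  _ = 2 * sin (n * θ) * cos (n * θ) := by ring_nf
  _ = sin (2 * n * θ) := by rw [← sin_two_mul, mul_assoc]

theorem two_mul_sin_mul_sum_sin_even_mul (θ : ℝ) (n : ℕ) :
    2 * sin θ * ∑ m ∈ range n, sin (2 * (m + 1) * θ) = cos θ - cos ((2 * n + 1) * θ) := calc
  _ = 2 * (sin (2 * θ / 2) * ∑ m ∈ range n, sin (2 * θ * m + 2 * θ)) := by
    rw [mul_div_cancel_left₀ θ two_ne_zero, mul_assoc]
    congr! 4
    ring
  _ = 2 * (sin (n * (2 * θ) / 2) * sin ((n - 1) * (2 * θ) / 2 + 2 * θ)) := by rw [sin_mul_sum_sin]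
  _ = 2 * sin ((n + 1) * θ) * sin (n * θ) := by ring_nf
  _ = cos θ - cos ((2 * n + 1) * θ) := by rw [two_mul_sin_mul_sin]; ring_nf

theorem two_mul_sin_sq_mul_sum_sub_mul_cos_odd_mul (θ : ℝ) (n : ℕ) :
    (2 * sin θ) ^ 2 * ∑ i ∈ range n, ((n : ℝ) - i) * cos ((2 * i + 1) * θ) =
      cos θ - cos ((2 * n + 1) * θ) := calc
  _ = 2 * sin θ *
        ∑ m ∈ range n, 2 * sin θ * ∑ i ∈ range (m + 1), cos ((2 * i + 1) * θ) := by
    rw [sum_range_sub_mul_eq_sum_sum_range, sq, mul_assoc, mul_sum]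
  _ = 2 * sin θ * ∑ m ∈ range n, sin (2 * (m + 1) * θ) := by
    simp only [two_mul_sin_mul_sum_cos_odd_mul, Nat.cast_succ]
  _ = cos θ - cos ((2 * n + 1) * θ) := two_mul_sin_mul_sum_sin_even_mul θ n

theorem sin_ne_zero_of_cos_odd_mul_eq_zero {θ : ℝ} {n : ℕ} (hcos : cos ((2 * n + 1) * θ) = 0) :
    sin θ ≠ 0 := fun hsin ↦ by
  have hcosθ : cos θ = 0 := by
    simpa [hsin, hcos] using (two_mul_sin_sq_mul_sum_sub_mul_cos_odd_mul θ n).symm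
  simpa [hsin, hcosθ] using sin_sq_add_cos_sq θ

theorem sum_four_mul_sub_mul_cos_odd_mul_of_cos_eq_zero {θ : ℝ} {n : ℕ}
    (hcos : cos ((2 * n + 1) * θ) = 0) :
    ∑ i ∈ range n, 4 * ((n : ℝ) - i) * cos ((2 * i + 1) * θ) = cos θ / sin θ ^ 2 := by
  have sin_sq_mul_sum := two_mul_sin_sq_mul_sum_sub_mul_cos_odd_mul θ n
  rw [hcos, sub_zero] at sin_sq_mul_sum
  have hsin : sin θ ≠ 0 := sin_ne_zero_of_cos_odd_mul_eq_zero hcos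
  rw [eq_div_iff (pow_ne_zero 2 hsin), ← sin_sq_mul_sum]
  simp only [mul_assoc, ← mul_sum]
  ring

theorem cos_odd_mul_odd_mul_pi_div_eq_zero (j : ℤ) (k : ℕ) :
    cos ((2 * k + 1) * ((2 * j + 1) * π / (2 * (2 * k + 1)))) = 0 := by
  refine cos_eq_zero_iff.mpr ⟨j, ?_⟩
  field_simp

theorem odd_mul_pi_div_mem_Ioo {j k : ℕ} (hjk : j < k) :
    (2 * j + 1) * π / (2 * (2 * k + 1)) ∈ Set.Ioo 0 (π / 2) := by
  refine ⟨by positivity, ?_⟩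
  have hlt : (2 * j + 1 : ℝ) < 2 * k + 1 := by gcongr
  rw [div_lt_div_iff₀ (by positivity) two_pos]
  linarith [mul_lt_mul_of_pos_right hlt pi_pos]

/-- for integers `0 ≤ j < k` and `θ = (2j+1)π/(2(2k+1))`, the sum
`Σ_{i=0}^{k−1} 4(k−i)cos((2i+1)θ)` equals `cos θ / sin²θ` and is strictly positive. -/
theorem trig_sum_eq_and_pos (j k : ℕ) (hjk : j < k) (θ : ℝ)
    (hθ : θ = (2 * (j : ℝ) + 1) * Real.pi / (2 * (2 * (k : ℝ) + 1))) :
    (∑ i ∈ Finset.range k, 4 * ((k : ℝ) - (i : ℝ)) * Real.cos ((2 * (i : ℝ) + 1) * θ)) =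
        Real.cos θ / Real.sin θ ^ 2 ∧
    0 < ∑ i ∈ Finset.range k, 4 * ((k : ℝ) - (i : ℝ)) * Real.cos ((2 * (i : ℝ) + 1) * θ) := by
  have hroot : cos ((2 * k + 1) * θ) = 0 := hθ ▸ mod_cast cos_odd_mul_odd_mul_pi_div_eq_zero j k
  obtain ⟨hθ_pos, hθ_lt⟩ : θ ∈ Set.Ioo 0 (π / 2) := hθ ▸ odd_mul_pi_div_mem_Ioo hjk
  have hcos : 0 < cos θ := cos_pos_of_mem_Ioo ⟨by linarith, hθ_lt⟩
  have hsin : 0 < sin θ := sin_pos_of_pos_of_lt_pi hθ_pos (by linarith)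
  have hsum := sum_four_mul_sub_mul_cos_odd_mul_of_cos_eq_zero hroot
  exact ⟨hsum, hsum ▸ by positivity⟩
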